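/- arXiv:2507.23054 — 4 statements merged into one kernel-verified Lean document; each statement's English description precedes it below -/
import Mathlib

section
/- Let L ⊆ ℝⁿ be compact, let τ ∈ (0,1), let S ⊆ ℕ, let δ : ℕ → ℝ with δ(0) > 0 and let x : ℕ → ℝⁿ with x(k) ∈ L for all k. Assume that δ(k+1) = τ⁻¹·δ(k) whenever k ∈ S and δ(k+1) = τ·δ(k) whenever k ∉ S, and that for all j, k ∈ S with j < k one has ‖x(k+1) − x(j+1)‖ ≥ δ(k). Then δ(k) → 0 as k → ∞. -/
/-!
The points `x (k + 1)` with `k ∈ S` and `δ k ≥ ε` are pairwise `ε`-separated in a compact set, so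
there are only finitely many of them: eventually, every success happens at a level `δ k < ε`
(`eventually_lt_of_separated`). From then on `δ` shrinks by the factor `τ` whenever it is at
least `ε`, so it drops below `ε` at some point, and afterwards it can exceed `ε` only through a
single expansion, hence stays below `τ⁻¹ * ε`.
-/

/-- A sequence in a compact set cannot contain infinitely many `ε`-separated terms, so the
separation radii along `S` are eventually below any `ε > 0`. -/
lemma eventually_lt_of_separated {E : Type*} [NormedAddCommGroup E] {L : Set E}
    (hL : IsCompact L) {S : Set ℕ} {δ : ℕ → ℝ} {x : ℕ → E} (hxL : ∀ k, x k ∈ L)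
    (hsep : ∀ j ∈ S, ∀ k ∈ S, j < k → ‖x (k + 1) - x (j + 1)‖ ≥ δ k) {ε : ℝ} (hε : 0 < ε) :
    ∀ᶠ k in Filter.atTop, k ∈ S → δ k < ε := by
  by_contra h
  obtain ⟨φ, hφ, hP⟩ := Filter.extraction_of_frequently_atTop (Filter.not_eventually.mp h)
  obtain ⟨a, -, ψ, hψ, ha⟩ := hL.tendsto_subseq fun i => hxL (φ i + 1)
  obtain ⟨N, hN⟩ := Metric.cauchySeq_iff.mp ha.cauchySeq ε hε
  have hclose := hN (N + 1) (by simp) N le_rfl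
  have hlt : φ (ψ N) < φ (ψ (N + 1)) := hφ (hψ N.lt_succ_self)
  have h1 := hP (ψ N)
  have h2 := hP (ψ (N + 1))
  push Not at h1 h2
  have hfar := hsep _ h1.1 _ h2.1 hlt
  rw [dist_eq_norm] at hclose
  simp only [Function.comp_apply] at hclose
  linarith [h2.2]


/-- Theorem 4.2 of the paper: the exclusion size parameter of ADS tends to 0. -/
theorem ads_exclusion_radius_tendsto_zero {n : ℕ}
    (L : Set (EuclideanSpace ℝ (Fin n))) (hL : IsCompact L)
    (τ : ℝ) (hτ : τ ∈ Set.Ioo (0 : ℝ) 1)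
    (S : Set ℕ) (δ : ℕ → ℝ) (hδ0 : δ 0 > 0)
    (x : ℕ → EuclideanSpace ℝ (Fin n)) (hxL : ∀ k, x k ∈ L)
    (hsucc : ∀ k ∈ S, δ (k + 1) = τ⁻¹ * δ k)
    (hfail : ∀ k ∉ S, δ (k + 1) = τ * δ k)
    (hsep : ∀ j ∈ S, ∀ k ∈ S, j < k → ‖x (k + 1) - x (j + 1)‖ ≥ δ k) :
    Filter.Tendsto δ Filter.atTop (nhds 0) := by
  obtain ⟨hτ0, hτ1⟩ := hτ
  have hpos : ∀ k, 0 < δ k := by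
    intro k
    induction k with
    | zero => exact hδ0
    | succ k ih =>
      by_cases hk : k ∈ S
      · rw [hsucc k hk]; positivity
      · rw [hfail k hk]; positivity
  rw [Metric.tendsto_atTop]
  intro η hη
  -- The threshold `τ * η` leaves room for one expansion by `τ⁻¹`.
  have hε : 0 < τ * η := mul_pos hτ0 hη
  obtain ⟨N, hN⟩ := Filter.eventually_atTop.mp (eventually_lt_of_separated hL hxL hsep hε)
  have hdec : ∀ k ≥ N, τ * η ≤ δ k → δ (k + 1) = τ * δ k := fun k hk hle =>
    hfail k fun hS => (hN k hk hS).not_ge hle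
  obtain ⟨M, hMN, hM⟩ : ∃ M ≥ N, δ M < τ * η := by
    by_contra! hall
    have hgeom : ∀ m, δ (N + m) = τ ^ m * δ N := by
      intro m
      induction m with
      | zero => simp
      | succ m ih =>
        rw [← add_assoc, hdec _ (by omega) (hall _ (by omega)), ih]
        ring
    have hlim : Filter.Tendsto (fun m => τ ^ m * δ N) Filter.atTop (nhds 0) := by
      simpa using (tendsto_pow_atTop_nhds_zero_of_lt_one hτ0.le hτ1).mul_const (δ N)
    obtain ⟨m, hm⟩ := (hlim.eventually_lt_const hε).exists
    exact (hall (N + m) (by omega)).not_gt (hgeom m ▸ hm)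
  refine ⟨M, fun k hk => ?_⟩
  rw [Real.dist_eq, sub_zero, abs_of_pos (hpos k)]
  induction k, hk using Nat.le_induction with
  | base => nlinarith
  | succ k hk ih =>
    by_cases hS : k ∈ S
    · rw [hsucc k hS, inv_mul_lt_iff₀ hτ0]
      exact hN k (hMN.le.trans hk) hS
    · rw [hfail k hS]
      nlinarith [hpos k]
end

section
/- Let L ⊆ ℝⁿ be compact, let τ ∈ (0,1), let S ⊆ ℕ, let δ : ℕ → ℝ with δ(0) > 0 and let x : ℕ → ℝⁿ with x(k) ∈ L for all k. Assume that δ(k+1) = τ⁻¹·δ(k) whenever k ∈ S and δ(k+1) = τ·δ(k) whenever k ∉ S, and that for all j, k ∈ S with j < k one has ‖x(k+1) − x(j+1)‖ ≥ δ(k). Then there exist a point x̂ ∈ L and an infinite set K ⊆ ℕ \ S such that the subsequence (x(k))_{k ∈ K} converges to x̂. -/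
/-!
The unsuccessful iterations are infinite in number: otherwise every iteration from some `N` on is
successful, so `δ` is nondecreasing and positive from `N` on, and the incumbents after `N` are
pairwise at distance at least `δ N > 0`. Such a sequence has no convergent subsequence, although it
lies in the compact set `L`. Compactness of `L`, applied to the incumbents enumerated along the
infinite set of unsuccessful iterations, then yields the refining subsequence.
-/

/-- A sequence in a compact set is not uniformly separated. -/
lemma exists_lt_dist_lt_of_isCompact {X : Type*} [PseudoMetricSpace X] {L : Set X}
    (hL : IsCompact L) {y : ℕ → X} (hy : ∀ m, y m ∈ L) {ε : ℝ} (hε : 0 < ε) :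
    ∃ i j, i < j ∧ dist (y j) (y i) < ε := by
  obtain ⟨a, -, φ, hφ, hlim⟩ := hL.tendsto_subseq hy
  obtain ⟨M, hM⟩ := Metric.cauchySeq_iff.1 hlim.cauchySeq ε hε
  exact ⟨φ M, φ (M + 1), hφ M.lt_succ_self, hM (M + 1) (Nat.le_succ M) M le_rfl⟩

/-- Along any infinite set of indices, a sequence in a compact set has a convergent subsequence. -/
lemma exists_tendsto_inf_principal_of_isCompact {X : Type*} [PseudoMetricSpace X] {L : Set X}
    (hL : IsCompact L) {x : ℕ → X} (hx : ∀ k, x k ∈ L) {T : Set ℕ} (hT : T.Infinite) :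
    ∃ a ∈ L, ∃ K : Set ℕ, K ⊆ T ∧ K.Infinite ∧
      Filter.Tendsto x (Filter.atTop ⊓ Filter.principal K) (nhds a) := by
  obtain ⟨e, he, heT⟩ : ∃ e : ℕ → ℕ, StrictMono e ∧ ∀ m, e m ∈ T :=
    ⟨Nat.nth (· ∈ T), Nat.nth_strictMono hT, Nat.nth_mem_of_infinite hT⟩
  obtain ⟨a, ha, φ, hφ, hlim⟩ := hL.tendsto_subseq fun m => hx (e m)
  have hmono : StrictMono (e ∘ φ) := he.comp hφ
  refine ⟨a, ha, Set.range (e ∘ φ), ?_, Set.infinite_range_of_injective hmono.injective, ?_⟩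
  · rintro _ ⟨m, rfl⟩
    exact heT _
  · intro U hU
    obtain ⟨M, hM⟩ := Filter.eventually_atTop.1 (hlim.eventually hU)
    rw [Filter.mem_map, Filter.mem_inf_principal]
    filter_upwards [Filter.eventually_ge_atTop ((e ∘ φ) M)]
    rintro _ hk ⟨m, rfl⟩
    exact hM m (hmono.le_iff_le.1 hk)

/-- Corollary 4.4 of the paper: existence of a refining subsequence of
incumbent solutions, indexed by unsuccessful iterations, converging to a refined point. -/
theorem ads_refining_subsequence_exists {n : ℕ}
    (L : Set (EuclideanSpace ℝ (Fin n))) (hL : IsCompact L)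
    (τ : ℝ) (hτ : τ ∈ Set.Ioo (0 : ℝ) 1)
    (S : Set ℕ) (δ : ℕ → ℝ) (hδ0 : δ 0 > 0)
    (x : ℕ → EuclideanSpace ℝ (Fin n)) (hxL : ∀ k, x k ∈ L)
    (hsucc : ∀ k ∈ S, δ (k + 1) = τ⁻¹ * δ k)
    (hfail : ∀ k ∉ S, δ (k + 1) = τ * δ k)
    (hsep : ∀ j ∈ S, ∀ k ∈ S, j < k → ‖x (k + 1) - x (j + 1)‖ ≥ δ k) :
    ∃ xhat ∈ L, ∃ K : Set ℕ, K ⊆ Sᶜ ∧ K.Infinite ∧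
      Filter.Tendsto x (Filter.atTop ⊓ Filter.principal K) (nhds xhat) := by
  obtain ⟨hτ0, hτ1⟩ := hτ
  have hpos : ∀ k, 0 < δ k := by
    intro k
    induction k with
    | zero => exact hδ0
    | succ k ih =>
      by_cases hk : k ∈ S
      · rw [hsucc k hk]; positivity
      · rw [hfail k hk]; positivity
  refine exists_tendsto_inf_principal_of_isCompact hL hxL fun hfin => ?_
  obtain ⟨N, hN⟩ : ∃ N, ∀ k, N ≤ k → k ∈ S := by
    obtain ⟨B, hB⟩ := hfin.bddAbove
    refine ⟨B + 1, fun k hk => ?_⟩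
    by_contra hkS
    have := hB hkS
    omega
  have hδN : ∀ k, N ≤ k → δ N ≤ δ k := by
    intro k hk
    induction k, hk using Nat.le_induction with
    | base => exact le_rfl
    | succ k hk ih =>
      rw [hsucc k (hN k hk)]
      exact ih.trans (le_mul_of_one_le_left (hpos k).le ((one_le_inv₀ hτ0).2 hτ1.le))
  obtain ⟨i, j, hij, hd⟩ :=
    exists_lt_dist_lt_of_isCompact hL (y := fun m => x (N + m + 1)) (fun m => hxL _) (hpos N)
  rw [dist_eq_norm] at hd
  have hs := hsep (N + i) (hN _ (by omega)) (N + j) (hN _ (by omega)) (by omega)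
  have hm := hδN (N + j) (by omega)
  linarith
end

section
/- Let Ω ⊆ ℝⁿ, let x̂ ∈ Ω, and let f : ℝⁿ → ℝ be Lipschitz continuous on some neighborhood of x̂. Let v̂ ∈ ℝⁿ be a hypertangent vector to Ω at x̂, i.e., there exists ε > 0 such that y + t·w ∈ Ω for all w ∈ ℝⁿ with ‖w − v̂‖ < ε, all y ∈ Ω with ‖y − x̂‖ < ε, and all t ∈ (0, ε). Let (p_k) be a sequence in Ω converging to x̂, let (Δ_k) be strictly positive reals converging to 0, let (v_k) be a sequence in ℝⁿ converging to v̂, let (δ_k) be nonnegative reals with δ_k/Δ_k → 0, and let (w_k) be a sequence in ℝⁿ with ‖w_k‖ ≤ 1 for all k. Define y_k := p_k + Δ_k·v_k + δ_k·w_k, and assume that for every k, if y_k ∈ Ω then f(y_k) ≥ f(p_k). Then the Clarke–Jahn generalized directional derivative of f at x̂ in the direction v̂ is nonnegative; explicitly: for every η > 0 there exist x ∈ Ω and t ∈ (0, η) such that ‖x − x̂‖ < η, x + t·v̂ ∈ Ω, and f(x + t·v̂) − f(x) ≥ −η·t. -/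
/-!
Write `y k = p k + Δ k • u k` with `u k = v k + (δ k / Δ k) • w k`. Since `δ k / Δ k → 0` and
`‖w k‖ ≤ 1`, also `u k → vhat`. Hypertangency then puts both `y k` and `p k + Δ k • vhat` in `Ω`
for large `k`, so `f (y k) ≥ f (p k)`, and the Lipschitz bound near `xhat` gives
`f (p k + Δ k • vhat) ≥ f (y k) - c * Δ k * ‖u k - vhat‖`. Because `c * ‖u k - vhat‖ → 0`, the
pair `x = p k`, `t = Δ k` is a witness for any large `k`.
-/


/-- Theorem 4.7 of the paper: the Clarke–Jahn generalized directional
derivative of f at the refined point xhat in the refining direction vhat is nonnegative. -/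
theorem ads_clarke_jahn_nonneg {n : ℕ}
    (Ω : Set (EuclideanSpace ℝ (Fin n)))
    (xhat : EuclideanSpace ℝ (Fin n)) (hxhat : xhat ∈ Ω)
    (f : EuclideanSpace ℝ (Fin n) → ℝ)
    (hlip : ∃ (c : NNReal) (s : Set (EuclideanSpace ℝ (Fin n))),
      s ∈ nhds xhat ∧ LipschitzOnWith c f s)
    (vhat : EuclideanSpace ℝ (Fin n))
    (hyper : ∃ ε > (0 : ℝ), ∀ w : EuclideanSpace ℝ (Fin n), ‖w - vhat‖ < ε →
      ∀ y ∈ Ω, ‖y - xhat‖ < ε → ∀ t : ℝ, 0 < t → t < ε → y + t • w ∈ Ω)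
    (p : ℕ → EuclideanSpace ℝ (Fin n)) (hpΩ : ∀ k, p k ∈ Ω)
    (hplim : Filter.Tendsto p Filter.atTop (nhds xhat))
    (Δ : ℕ → ℝ) (hΔpos : ∀ k, 0 < Δ k)
    (hΔlim : Filter.Tendsto Δ Filter.atTop (nhds 0))
    (v : ℕ → EuclideanSpace ℝ (Fin n))
    (hvlim : Filter.Tendsto v Filter.atTop (nhds vhat))
    (δ : ℕ → ℝ) (hδnonneg : ∀ k, 0 ≤ δ k)
    (hratio : Filter.Tendsto (fun k => δ k / Δ k) Filter.atTop (nhds 0))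
    (w : ℕ → EuclideanSpace ℝ (Fin n)) (hw : ∀ k, ‖w k‖ ≤ 1)
    (y : ℕ → EuclideanSpace ℝ (Fin n))
    (hy : ∀ k, y k = p k + Δ k • v k + δ k • w k)
    (hfail : ∀ k, y k ∈ Ω → f (y k) ≥ f (p k)) :
    ∀ η > (0 : ℝ), ∃ x ∈ Ω, ∃ t : ℝ, 0 < t ∧ t < η ∧ ‖x - xhat‖ < η ∧
      x + t • vhat ∈ Ω ∧ f (x + t • vhat) - f x ≥ -η * t := by
  intro η hη
  obtain ⟨c, s, hs, hL⟩ := hlip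
  obtain ⟨ε, hε, hyp⟩ := hyper
  set u : ℕ → EuclideanSpace ℝ (Fin n) := fun k => v k + (δ k / Δ k) • w k with hu
  have hyu : ∀ k, y k = p k + Δ k • u k := by
    intro k
    rw [hy, hu, smul_add, smul_smul, mul_div_cancel₀ _ (hΔpos k).ne', add_assoc]
  have h_err : Filter.Tendsto (fun k => (δ k / Δ k) • w k) Filter.atTop (nhds 0) := by
    refine squeeze_zero_norm (fun k => ?_) hratio
    have h0 : 0 ≤ δ k / Δ k := div_nonneg (hδnonneg k) (hΔpos k).le
    rw [norm_smul, Real.norm_of_nonneg h0]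
    exact mul_le_of_le_one_right h0 (hw k)
  have hulim : Filter.Tendsto u Filter.atTop (nhds vhat) := by
    simpa using hvlim.add h_err
  have hudiff : Filter.Tendsto (fun k => ‖u k - vhat‖) Filter.atTop (nhds 0) :=
    tendsto_iff_norm_sub_tendsto_zero.mp hulim
  have hcdiff : Filter.Tendsto (fun k => (c : ℝ) * ‖u k - vhat‖) Filter.atTop (nhds 0) := by
    simpa using hudiff.const_mul (c : ℝ)
  have hpdiff : Filter.Tendsto (fun k => ‖p k - xhat‖) Filter.atTop (nhds 0) :=
    tendsto_iff_norm_sub_tendsto_zero.mp hplim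
  have hylim : Filter.Tendsto (fun k => p k + Δ k • u k) Filter.atTop (nhds xhat) := by
    simpa using hplim.add (hΔlim.smul hulim)
  have hzlim : Filter.Tendsto (fun k => p k + Δ k • vhat) Filter.atTop (nhds xhat) := by
    simpa using hplim.add (hΔlim.smul_const vhat)
  obtain ⟨k, hk_u, hk_c, hk_p, hk_pη, hk_Δ, hk_Δη, hk_y, hk_z⟩ :=
    ((hudiff.eventually_lt_const hε).and <| (hcdiff.eventually_lt_const hη).and <|
      (hpdiff.eventually_lt_const hε).and <| (hpdiff.eventually_lt_const hη).and <|
      (hΔlim.eventually_lt_const hε).and <| (hΔlim.eventually_lt_const hη).and <|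
      (hylim.eventually_mem hs).and (hzlim.eventually_mem hs)).exists
  refine ⟨p k, hpΩ k, Δ k, hΔpos k, hk_Δη, hk_pη,
    hyp vhat (by simpa using hε) _ (hpΩ k) hk_p _ (hΔpos k) hk_Δ, ?_⟩
  have hf := hfail k (hyu k ▸ hyp (u k) hk_u _ (hpΩ k) hk_p _ (hΔpos k) hk_Δ)
  rw [hyu k] at hf
  have hd := hL.dist_le_mul _ hk_y _ hk_z
  rw [dist_add_left, dist_eq_norm (Δ k • u k), ← smul_sub, norm_smul,
    Real.norm_of_nonneg (hΔpos k).le, Real.dist_eq] at hd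
  have hle := (le_abs_self _).trans hd
  have hmul := mul_le_mul_of_nonneg_right hk_c.le (hΔpos k).le
  linarith
end

section
/- Let n, m ∈ ℕ, let D be a real n × m matrix, let x⁰ ∈ ℝⁿ, let δ⁰ > 0, let p and q be positive integers, let ž, ẑ ∈ ℤ with ž ≤ ẑ, let k ∈ ℕ, let r : Fin k → ℤ satisfy ž ≤ r(i) ≤ ẑ for all i, and let z : Fin k → ℕᵐ. Then there exists y ∈ ℕᵐ such that x⁰ + ∑_{i} δ⁰·(p/q)^{r(i)}·(D·z(i)) = x⁰ + ((p : ℝ)^ž / (q : ℝ)^ẑ)·δ⁰·(D·y), where the exponents are integer powers and D·v denotes the matrix-vector product. -/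
/-!
Every step size `(p/q)^(r i)` with `zcheck ≤ r i ≤ zhat` is a natural multiple of the common
factor `p^zcheck / q^zhat` (`div_zpow_eq_mul_natCast`). By linearity of `D.mulVec`, the sum of the
steps is therefore that factor times `D` applied to a combination of the `z i` with natural
coefficients.
-/

/-- The scalar identity `(p/q)^r = (p^a / q^b) * (p^(r-a) * q^(b-r))`. For `a ≤ r ≤ b` both
exponents in the last factor are nonnegative, so `Int.toNat` does not truncate and that factor is
a natural number. -/
lemma div_zpow_eq_mul_natCast {p q : ℕ} (hp : 0 < p) (hq : 0 < q) {a b r : ℤ}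
    (ha : a ≤ r) (hb : r ≤ b) :
    ((p : ℝ) / q) ^ r
      = (p : ℝ) ^ a / (q : ℝ) ^ b * ((p ^ (r - a).toNat * q ^ (b - r).toNat : ℕ) : ℝ) := by
  have hp' : (p : ℝ) ≠ 0 := by positivity
  have hq' : (q : ℝ) ≠ 0 := by positivity
  push_cast
  rw [← zpow_natCast (p : ℝ), ← zpow_natCast (q : ℝ), Int.toNat_of_nonneg (by lia),
    Int.toNat_of_nonneg (by lia), zpow_sub₀ hp', zpow_sub₀ hq', div_zpow]
  field_simp

/-- Lemma 4.8 of the paper: iterates of OrthoMADS with rational ratio τ = p/q,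
obtained as sums of steps δ⁰·τ^{r(i)}·D·z(i), belong to the finer mesh generated by
(p^zcheck/q^zhat)·δ⁰·D. -/
theorem orthomads_finer_mesh {n m : ℕ}
    (D : Matrix (Fin n) (Fin m) ℝ) (x0 : Fin n → ℝ)
    (δ0 : ℝ) (hδ0 : 0 < δ0)
    (p q : ℕ) (hp : 0 < p) (hq : 0 < q)
    (zcheck zhat : ℤ) (hzz : zcheck ≤ zhat)
    (k : ℕ) (r : Fin k → ℤ) (hr : ∀ i, zcheck ≤ r i ∧ r i ≤ zhat)
    (z : Fin k → (Fin m → ℕ)) :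
    ∃ y : Fin m → ℕ,
      x0 + ∑ i : Fin k, (δ0 * ((p : ℝ) / (q : ℝ)) ^ (r i)) • D.mulVec (fun j => (z i j : ℝ))
        = x0 + (((p : ℝ) ^ zcheck / (q : ℝ) ^ zhat) * δ0) • D.mulVec (fun j => (y j : ℝ)) := by
  -- Each step contributes `z i` scaled by the natural number `p^(r i - zcheck) * q^(zhat - r i)`.
  let c : Fin k → ℕ := fun i => p ^ (r i - zcheck).toNat * q ^ (zhat - r i).toNat
  refine ⟨fun j => ∑ i, c i * z i j, ?_⟩
  have hy : (fun j => ((∑ i, c i * z i j : ℕ) : ℝ))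
      = ∑ i, (c i : ℝ) • (fun j => (z i j : ℝ)) := by
    ext j
    simp
  rw [hy, Matrix.mulVec_sum, Finset.smul_sum]
  congr 1
  refine Finset.sum_congr rfl fun i _ => ?_
  rw [Matrix.mulVec_smul, smul_smul, div_zpow_eq_mul_natCast hp hq (hr i).1 (hr i).2]
  congr 1
  ring
end
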